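/- Let p and q be distinct primes, H a nontrivial finite abelian p-group with exp(H) = p^k, and m a positive integer. Then K(H ⊕ C_{q^m}) = k(H) + 1 − 1/q^m + 1/(p^k q^m). -/

import Mathlib

/-- The cross number `k(S)` of a sequence (finite multiset) `S` over an additive group:
the sum, with multiplicity, of the reciprocals of the orders of its elements. -/
noncomputable def crossNum {G : Type*} [AddCommGroup G] (S : Multiset G) : ℝ :=
  (S.map fun g => ((addOrderOf g : ℝ))⁻¹).sum

/-- `S` is zero-sum free: no nonempty sub-multiset of `S` has sum `0`. -/
def IsZeroSumFree {G : Type*} [AddCommGroup G] (S : Multiset G) : Prop :=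
  ∀ T : Multiset G, T ≤ S → T ≠ 0 → T.sum ≠ 0

/-- The little cross number `k(G)`: the maximal cross number of a zero-sum free
sequence over `G`. -/
noncomputable def littleK (G : Type*) [AddCommGroup G] : ℝ :=
  sSup {x : ℝ | ∃ S : Multiset G, IsZeroSumFree S ∧ crossNum S = x}

/-- `S` is a minimal zero-sum sequence: nonempty, sum zero, and no nonempty proper
sub-multiset has sum `0`. -/
def IsMinZeroSum {G : Type*} [AddCommGroup G] (S : Multiset G) : Prop :=
  S ≠ 0 ∧ S.sum = 0 ∧ ∀ T : Multiset G, T ≤ S → T ≠ 0 → T ≠ S → T.sum ≠ 0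

/-- The cross number `K(G)`: the maximal cross number of a minimal zero-sum
sequence over `G`. -/
noncomputable def bigK (G : Type*) [AddCommGroup G] : ℝ :=
  sSup {x : ℝ | ∃ S : Multiset G, IsMinZeroSum S ∧ crossNum S = x}

/-!
The lower bound only uses `k(G) + 1 / exp G ≤ K(G)` and `k(H) + k(C) ≤ k(H ⊕ C)`.

For the upper bound, let `U` be a minimal zero-sum sequence over `H ⊕ C`, where `C = C_{q^m}`, and
replace a subsequence whose `C`-components form a minimal zero-sum sequence by its sum, which lies
in `H`. Such a merge keeps `U` minimal zero-sum. Since `K(C) = 1`, it does not lower the cross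
number if all the `H`-components involved have the same order. Merging through the levels of
`p`-power orders in turn, what cannot be merged is zero-sum free over `C`, and moving it up one
level after another costs at most `(1 - p⁻ᵏ) k(C)` altogether. What is left at the end is a minimal
zero-sum sequence over `H`, so `K(H ⊕ C) ≤ K(H) + (1 - p⁻ᵏ) k(C)`. For a `p`-group moreover
`K(H) = k(H) + 1 / exp H`. That `K(C) = 1` follows from the same merging, along the multiplications
by powers of `q` instead of the projection to `C`.
-/

section

variable {G H C α β : Type*} [AddCommGroup G] [AddCommGroup H] [AddCommGroup C]

theorem exists_eq_add_of_le_add {S A B : Multiset α} (h : S ≤ A + B) :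
    ∃ A' ≤ A, ∃ B' ≤ B, S = A' + B' := by
  classical
  refine ⟨S ∩ A, Multiset.inter_le_right, S - A, tsub_le_iff_left.mpr h, ?_⟩
  rw [add_comm, Multiset.sub_add_inter]

theorem exists_le_map_eq_of_le_map {f : α → β} {S : Multiset α} {T : Multiset β}
    (h : T ≤ S.map f) : ∃ S' ≤ S, S'.map f = T := by
  obtain ⟨R, hR⟩ := Multiset.le_iff_exists_add.mp h
  obtain ⟨S', S'', hS', -, rfl⟩ :=
    Multiset.rel_add_right.mp (Multiset.rel_map_left.mp (Multiset.rel_eq.mpr hR))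
  exact ⟨S', Multiset.le_add_right _ _, Multiset.rel_eq.mp (Multiset.rel_map_left.mpr hS')⟩

theorem nsmul_sum_eq_zero {S : Multiset G} {n : ℕ} (h : ∀ g ∈ S, n • g = 0) : n • S.sum = 0 :=
  (nsmulAddMonoidHom (α := G) n).ker.multiset_sum_mem S h

theorem crossNum_zero : crossNum (0 : Multiset G) = 0 := by
  simp [crossNum]

theorem crossNum_add (S T : Multiset G) : crossNum (S + T) = crossNum S + crossNum T := by
  simp [crossNum]

theorem crossNum_cons (g : G) (S : Multiset G) :
    crossNum (g ::ₘ S) = (addOrderOf g : ℝ)⁻¹ + crossNum S := by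
  simp [crossNum]

theorem crossNum_map_of_injective {f : G →+ H} (hf : Function.Injective f) (S : Multiset G) :
    crossNum (S.map f) = crossNum S := by
  simp [crossNum, addOrderOf_injective f hf]

theorem crossNum_eq_card_mul_inv {S : Multiset G} {n : ℕ} (h : ∀ g ∈ S, addOrderOf g = n) :
    crossNum S = S.card * (n : ℝ)⁻¹ := by
  have hS : S.map (fun g => (addOrderOf g : ℝ)⁻¹) = S.map fun _ => (n : ℝ)⁻¹ :=
    Multiset.map_congr rfl fun g hg => by rw [h g hg]
  simp [crossNum, hS]

theorem card_mul_inv_le_crossNum {S : Multiset G} {n : ℕ} (hn : 0 < n)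
    (h : ∀ g ∈ S, n • g = 0) : S.card * (n : ℝ)⁻¹ ≤ crossNum S := by
  have hS : S.card • (n : ℝ)⁻¹ ≤ (S.map fun g => (addOrderOf g : ℝ)⁻¹).sum := by
    rw [← Multiset.card_map]
    refine Multiset.card_nsmul_le_sum fun x hx => ?_
    obtain ⟨g, hg, rfl⟩ := Multiset.mem_map.mp hx
    have hdvd := addOrderOf_dvd_of_nsmul_eq_zero (h g hg)
    have hpos : (0 : ℝ) < addOrderOf g := mod_cast Nat.pos_of_dvd_of_pos hdvd hn
    exact inv_anti₀ hpos (mod_cast Nat.le_of_dvd hn hdvd)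
  simpa [crossNum] using hS

theorem crossNum_le_card (S : Multiset G) : crossNum S ≤ S.card := by
  have hS : (S.map fun g => (addOrderOf g : ℝ)⁻¹).sum ≤
      (S.map fun g => (addOrderOf g : ℝ)⁻¹).card • (1 : ℝ) := by
    refine Multiset.sum_le_card_nsmul _ _ fun x hx => ?_
    obtain ⟨g, -, rfl⟩ := Multiset.mem_map.mp hx
    exact Nat.cast_inv_le_one _
  simpa [crossNum] using hS

namespace IsZeroSumFree

variable {S T : Multiset G}

theorem zero : IsZeroSumFree (0 : Multiset G) :=
  fun _ hT hT0 => absurd (Multiset.le_zero.mp hT) hT0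

theorem mono (hS : IsZeroSumFree S) (h : T ≤ S) : IsZeroSumFree T :=
  fun X hX => hS X (hX.trans h)

theorem eq_zero_of_sum_eq_zero (hS : IsZeroSumFree S) (h : T ≤ S) (hT : T.sum = 0) : T = 0 :=
  by_contra fun hT0 => hS T h hT0 hT

theorem zero_notMem (hS : IsZeroSumFree S) : (0 : G) ∉ S := fun h =>
  hS {0} (Multiset.singleton_le.mpr h) (Multiset.singleton_ne_zero 0) (Multiset.sum_singleton 0)

theorem card_lt_natCard {K : AddSubgroup G} [Finite K] (hS : IsZeroSumFree S)
    (h : ∀ g ∈ S, g ∈ K) : S.card < Nat.card K := by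
  induction S using Quotient.inductionOn with | _ l
  have hmem (i : Fin (l.length + 1)) : (l.take i).sum ∈ K :=
    K.list_sum_mem fun g hg => h g (List.mem_of_mem_take hg)
  have hinj : Function.Injective fun i : Fin (l.length + 1) => (⟨_, hmem i⟩ : K) := by
    refine .of_lt_imp_ne fun i j hij hsum => ?_
    have hsplit : (l.take i).sum + ((l.take j).drop i).sum = (l.take j).sum := by
      rw [← List.sum_take_add_sum_drop (l.take j) i, List.take_take, min_eq_left (mod_cast hij.le)]
    have hzero : ((l.take j).drop i).sum = 0 := by
      rw [← Subtype.mk.inj hsum] at hsplit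
      exact add_eq_left.mp hsplit
    have hsub : ((l.take j).drop i).Sublist l :=
      (List.drop_sublist _ _).trans (List.take_sublist _ _)
    have hnil := hS.eq_zero_of_sum_eq_zero (Multiset.coe_le.mpr hsub.subperm) hzero
    have hlen : ((l.take j).drop i).length = 0 := congrArg Multiset.card hnil
    rw [List.length_drop, List.length_take] at hlen
    omega
  simpa using Nat.card_le_card_of_injective _ hinj

theorem card_lt_of_nsmul_eq_zero [IsAddCyclic G] [Finite G] {n : ℕ} (hn : 0 < n)
    (hS : IsZeroSumFree S) (h : ∀ g ∈ S, n • g = 0) : S.card < n := by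
  refine (hS.card_lt_natCard (K := (nsmulAddMonoidHom (α := G) n).ker) h).trans_le ?_
  rw [IsAddCyclic.card_nsmulAddMonoidHom_ker]
  exact Nat.gcd_le_right _ hn

theorem map_inl_add_map_inr {T : Multiset H} (hS : IsZeroSumFree S) (hT : IsZeroSumFree T) :
    IsZeroSumFree (S.map (AddMonoidHom.inl G H) + T.map (AddMonoidHom.inr G H)) := by
  intro X hX hX0 hsum
  obtain ⟨_, hXS, _, hXT, rfl⟩ := exists_eq_add_of_le_add hX
  obtain ⟨A, hA, rfl⟩ := exists_le_map_eq_of_le_map hXS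
  obtain ⟨B, hB, rfl⟩ := exists_le_map_eq_of_le_map hXT
  rw [Multiset.sum_add, ← map_multiset_sum, ← map_multiset_sum] at hsum
  have hA0 := hS.eq_zero_of_sum_eq_zero hA (by simpa using congrArg Prod.fst hsum)
  have hB0 := hT.eq_zero_of_sum_eq_zero hB (by simpa using congrArg Prod.snd hsum)
  simp [hA0, hB0] at hX0

end IsZeroSumFree

theorem isMinZeroSum_iff_minimal {S : Multiset G} :
    IsMinZeroSum S ↔ Minimal (fun T : Multiset G => T ≠ 0 ∧ T.sum = 0) S := by
  simp only [IsMinZeroSum, minimal_iff, and_assoc]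
  refine and_congr_right fun _ => and_congr_right fun _ => forall_congr' fun T => ?_
  grind

theorem isMinZeroSum_iff_forall_add {S : Multiset G} :
    IsMinZeroSum S ↔
      S ≠ 0 ∧ S.sum = 0 ∧ ∀ T R, S = T + R → T.sum = 0 → T = 0 ∨ R = 0 := by
  refine and_congr_right fun _ => and_congr_right fun _ => ⟨fun h T R hTR hT => ?_, ?_⟩
  · subst hTR
    by_contra! hne
    exact h T (Multiset.le_add_right _ _) hne.1 (by simpa using hne.2) hT
  · intro h T hTS hT0 hTne hT
    obtain ⟨R, rfl⟩ := Multiset.le_iff_exists_add.mp hTS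
    rcases h T R rfl hT with rfl | rfl <;> simp at hT0 hTne

theorem exists_isMinZeroSum_le {S : Multiset G} (hS : ¬ IsZeroSumFree S) :
    ∃ T ≤ S, IsMinZeroSum T := by
  simp only [IsZeroSumFree, not_forall, not_not] at hS
  obtain ⟨X, hXS, hX0, hX⟩ := hS
  obtain ⟨T, hTX, hT⟩ := exists_minimal_le_of_wellFoundedLT
    (fun T : Multiset G => T ≠ 0 ∧ T.sum = 0) X ⟨hX0, hX⟩
  exact ⟨T, hTX.trans hXS, isMinZeroSum_iff_minimal.mpr hT⟩

namespace IsMinZeroSum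

variable {S : Multiset G}

theorem isZeroSumFree_of_cons {g : G} (h : IsMinZeroSum (g ::ₘ S)) : IsZeroSumFree S := by
  refine fun T hT hT0 => h.2.2 T (hT.trans (Multiset.le_cons_self _ _)) hT0 ?_
  rintro rfl
  simpa using Multiset.card_le_card hT

theorem of_map {f : G →+ H} (hf : Function.Injective f) (h : IsMinZeroSum (S.map f)) :
    IsMinZeroSum S := by
  obtain ⟨hne, hsum, hmin⟩ := isMinZeroSum_iff_forall_add.mp h
  refine isMinZeroSum_iff_forall_add.mpr ⟨?_, ?_, fun T R hTR hT => ?_⟩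
  · rintro rfl
    exact hne rfl
  · rwa [← map_multiset_sum, map_eq_zero_iff f hf] at hsum
  · simpa using hmin (T.map f) (R.map f) (by rw [hTR, Multiset.map_add])
      (by rw [← map_multiset_sum, hT, map_zero])

theorem card_le_of_nsmul_eq_zero [IsAddCyclic G] [Finite G] {n : ℕ} (hn : 0 < n)
    (hS : IsMinZeroSum S) (h : ∀ g ∈ S, n • g = 0) : S.card ≤ n := by
  obtain ⟨g, hg⟩ := Multiset.exists_mem_of_ne_zero hS.1
  obtain ⟨S, rfl⟩ := Multiset.exists_cons_of_mem hg
  rw [Multiset.card_cons]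
  exact hS.isZeroSumFree_of_cons.card_lt_of_nsmul_eq_zero hn
    fun x hx => h x (Multiset.mem_cons_of_mem hx)

end IsMinZeroSum

theorem IsZeroSumFree.isMinZeroSum_neg_sum_cons {S : Multiset G} (hS : IsZeroSumFree S) :
    IsMinZeroSum (-S.sum ::ₘ S) := by
  have hsum : (-S.sum ::ₘ S).sum = 0 := by simp
  refine isMinZeroSum_iff_forall_add.mpr ⟨Multiset.cons_ne_zero, hsum, fun T R hTR hT => ?_⟩
  have hR : R.sum = 0 := by rwa [hTR, Multiset.sum_add, hT, zero_add] at hsum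
  rcases Multiset.mem_add.mp (hTR ▸ Multiset.mem_cons_self _ _) with h | h
  · obtain ⟨T, rfl⟩ := Multiset.exists_cons_of_mem h
    rw [Multiset.cons_add, Multiset.cons_inj_right] at hTR
    exact .inr (hS.eq_zero_of_sum_eq_zero (hTR ▸ Multiset.le_add_left _ _) hR)
  · obtain ⟨R, rfl⟩ := Multiset.exists_cons_of_mem h
    rw [Multiset.add_cons, Multiset.cons_inj_right] at hTR
    exact .inl (hS.eq_zero_of_sum_eq_zero (hTR ▸ Multiset.le_add_right _ _) hT)

section Extremal

theorem littleK_le {x : ℝ} (h : ∀ S : Multiset G, IsZeroSumFree S → crossNum S ≤ x) :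
    littleK G ≤ x :=
  csSup_le ⟨_, 0, .zero, rfl⟩ fun _ ⟨S, hS, hx⟩ => hx ▸ h S hS

theorem bigK_le {x : ℝ} (h : ∀ S : Multiset G, IsMinZeroSum S → crossNum S ≤ x) :
    bigK G ≤ x :=
  csSup_le ⟨_, _, IsZeroSumFree.zero.isMinZeroSum_neg_sum_cons, rfl⟩
    fun _ ⟨S, hS, hx⟩ => hx ▸ h S hS

variable [Finite G]

theorem IsZeroSumFree.crossNum_le_littleK {S : Multiset G} (hS : IsZeroSumFree S) :
    crossNum S ≤ littleK G := by
  refine le_csSup ⟨Nat.card (⊤ : AddSubgroup G), ?_⟩ ⟨S, hS, rfl⟩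
  rintro _ ⟨T, hT, rfl⟩
  have hcard := hT.card_lt_natCard fun g _ => AddSubgroup.mem_top g
  exact (crossNum_le_card T).trans (mod_cast hcard.le)

theorem IsMinZeroSum.crossNum_le_bigK {S : Multiset G} (hS : IsMinZeroSum S) :
    crossNum S ≤ bigK G := by
  refine le_csSup ⟨1 + littleK G, ?_⟩ ⟨S, hS, rfl⟩
  rintro _ ⟨T, hT, rfl⟩
  obtain ⟨g, hg⟩ := Multiset.exists_mem_of_ne_zero hT.1
  obtain ⟨T, rfl⟩ := Multiset.exists_cons_of_mem hg
  rw [crossNum_cons]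
  exact add_le_add (Nat.cast_inv_le_one _) hT.isZeroSumFree_of_cons.crossNum_le_littleK

theorem littleK_add_inv_exponent_le_bigK :
    littleK G + (AddMonoid.exponent G : ℝ)⁻¹ ≤ bigK G := by
  refine le_sub_iff_add_le.mp (littleK_le fun S hS => le_sub_iff_add_le.mpr ?_)
  refine le_trans ?_ hS.isMinZeroSum_neg_sum_cons.crossNum_le_bigK
  rw [crossNum_cons, add_comm]
  gcongr
  · exact mod_cast addOrderOf_pos _
  · exact Nat.le_of_dvd (Nat.pos_of_ne_zero AddMonoid.exponent_ne_zero_of_finite)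
      (AddMonoid.addOrder_dvd_exponent _)

theorem littleK_add_littleK_le_littleK_prod [Finite H] :
    littleK G + littleK H ≤ littleK (G × H) := by
  refine le_sub_iff_add_le.mp (littleK_le fun S hS => le_sub_comm.mp (littleK_le fun T hT => ?_))
  have hST := (hS.map_inl_add_map_inr hT).crossNum_le_littleK
  rw [crossNum_add, crossNum_map_of_injective (f := .inl G H) (Prod.mk_left_injective 0),
    crossNum_map_of_injective (f := .inr G H) (Prod.mk_right_injective 0)] at hST
  linarith

/- An element `g` of order `n = exp G` may be appended `n / d - 1` times to a zero-sum free sequence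
killed by `d`: a zero-sum subsequence with `j` copies of `g` gives `n ∣ d * j`, so `j = 0`. -/
theorem IsZeroSumFree.crossNum_add_inv_le {S : Multiset G} (hS : IsZeroSumFree S) {d : ℕ}
    (hd : d ∣ AddMonoid.exponent G) (h : ∀ g ∈ S, d • g = 0) :
    crossNum S + (d : ℝ)⁻¹ ≤ littleK G + (AddMonoid.exponent G : ℝ)⁻¹ := by
  obtain ⟨g, hg⟩ := AddMonoid.exists_addOrderOf_eq_exponent (.of_finite (G := G))
  have hn := AddMonoid.exponent_ne_zero_of_finite (G := G)
  obtain ⟨e, he⟩ := hd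
  rw [he] at hn hg ⊢
  have hd0 : 0 < d := Nat.pos_of_ne_zero (left_ne_zero_of_mul hn)
  have he0 : 0 < e := Nat.pos_of_ne_zero (right_ne_zero_of_mul hn)
  have hzsf : IsZeroSumFree (S + Multiset.replicate (e - 1) g) := by
    intro X hX hX0 hsum
    obtain ⟨T, hT, _, hR, rfl⟩ := exists_eq_add_of_le_add hX
    obtain ⟨j, hj, rfl⟩ := Multiset.le_replicate_iff.mp hR
    rw [Multiset.sum_add, Multiset.sum_replicate] at hsum
    have hdT : d • T.sum = 0 := nsmul_sum_eq_zero fun x hx => h x (Multiset.mem_of_le hT hx)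
    have hdj : (d * j) • g = 0 := by
      simpa [smul_add, hdT, mul_smul] using congrArg (d • ·) hsum
    have hej : e ∣ j :=
      Nat.dvd_of_mul_dvd_mul_left hd0 (hg ▸ addOrderOf_dvd_of_nsmul_eq_zero hdj)
    obtain rfl : j = 0 := Nat.eq_zero_of_dvd_of_lt hej (by omega)
    rw [zero_smul, add_zero] at hsum
    exact hX0 (by simp [hS.eq_zero_of_sum_eq_zero hT hsum])
  have hrep : crossNum (Multiset.replicate (e - 1) g) = (d : ℝ)⁻¹ - ((d * e : ℕ) : ℝ)⁻¹ := by
    rw [crossNum_eq_card_mul_inv fun x hx => (Multiset.eq_of_mem_replicate hx) ▸ hg,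
      Multiset.card_replicate, Nat.cast_pred he0]
    push_cast
    field_simp
  have hle := hzsf.crossNum_le_littleK
  rw [crossNum_add, hrep] at hle
  linarith

theorem littleK_eq_one_sub_inv_exponent (hG : bigK G ≤ 1) :
    littleK G = 1 - (AddMonoid.exponent G : ℝ)⁻¹ := by
  refine le_antisymm ?_ ?_
  · exact le_sub_iff_add_le.mpr (littleK_add_inv_exponent_le_bigK.trans hG)
  · have h := IsZeroSumFree.zero.crossNum_add_inv_le (G := G) (one_dvd _) (by simp)
    rw [crossNum_zero, Nat.cast_one, inv_one, zero_add] at h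
    exact sub_le_iff_le_add.mpr h

theorem bigK_eq_littleK_add_inv_exponent {p k : ℕ} (hp : p.Prime)
    (hG : AddMonoid.exponent G = p ^ k) :
    bigK G = littleK G + (AddMonoid.exponent G : ℝ)⁻¹ := by
  classical
  refine le_antisymm (bigK_le fun S hS => ?_) littleK_add_inv_exponent_le_bigK
  have hord (x : G) : ∃ a ≤ k, addOrderOf x = p ^ a :=
    (Nat.dvd_prime_pow hp).mp (hG ▸ AddMonoid.addOrder_dvd_exponent x)
  obtain ⟨g, hg, hmax⟩ := S.toFinset.exists_max_image addOrderOf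
    (Multiset.toFinset_nonempty.mpr hS.1)
  obtain ⟨S, rfl⟩ := Multiset.exists_cons_of_mem (Multiset.mem_toFinset.mp hg)
  have hkill : ∀ x ∈ S, addOrderOf g • x = 0 := by
    intro x hx
    have hle := hmax x (Multiset.mem_toFinset.mpr (Multiset.mem_cons_of_mem hx))
    obtain ⟨a, -, ha⟩ := hord g
    obtain ⟨b, -, hb⟩ := hord x
    rw [ha, hb, Nat.pow_le_pow_iff_right hp.one_lt] at hle
    rw [← addOrderOf_dvd_iff_nsmul_eq_zero, ha, hb]
    exact pow_dvd_pow p hle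
  rw [crossNum_cons, add_comm]
  exact hS.isZeroSumFree_of_cons.crossNum_add_inv_le (AddMonoid.addOrder_dvd_exponent g) hkill

end Extremal

/-- `MergesTo U V` says that `V` is obtained from the sequence `U` by repeatedly replacing a
nonempty subsequence by its sum. Merging keeps zero-sum freeness and minimality, so it lets one
trade a sequence for another one over a smaller subgroup. -/
inductive MergesTo : Multiset G → Multiset G → Prop
  | refl (U : Multiset G) : MergesTo U U
  | merge {T R V : Multiset G} : T ≠ 0 → MergesTo (T.sum ::ₘ R) V → MergesTo (T + R) V

namespace MergesTo

variable {U V W : Multiset G}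

theorem trans (hUV : MergesTo U V) (hVW : MergesTo V W) : MergesTo U W := by
  induction hUV with
  | refl U => exact hVW
  | merge hT _ ih => exact merge hT (ih hVW)

theorem add_right (h : MergesTo U V) (Z : Multiset G) : MergesTo (U + Z) (V + Z) := by
  induction h with
  | refl U => exact refl _
  | merge hT _ ih =>
    rw [add_assoc]
    exact merge hT (by rwa [← Multiset.cons_add])

theorem add_left (h : MergesTo U V) (Z : Multiset G) : MergesTo (Z + U) (Z + V) := by
  simpa only [add_comm Z] using h.add_right Z

theorem sum_eq (h : MergesTo U V) : U.sum = V.sum := by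
  induction h with
  | refl U => rfl
  | merge _ _ ih => rw [← ih, Multiset.sum_add, Multiset.sum_cons]

theorem eq_zero_iff (h : MergesTo U V) : U = 0 ↔ V = 0 := by
  induction h with
  | refl U => rfl
  | merge hT _ ih => simp [← ih, hT]

theorem forall_mem {K : AddSubgroup G} (h : MergesTo U V) (hU : ∀ u ∈ U, u ∈ K) :
    ∀ v ∈ V, v ∈ K := by
  induction h with
  | refl U => exact hU
  | merge _ _ ih =>
    refine ih fun x hx => ?_
    rcases Multiset.mem_cons.mp hx with rfl | hx
    · exact K.multiset_sum_mem _ fun t ht => hU t (Multiset.mem_add.mpr (.inl ht))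
    · exact hU x (Multiset.mem_add.mpr (.inr hx))

theorem exists_add {X X' : Multiset G} (h : MergesTo U (X + X')) :
    ∃ Y Y', U = Y + Y' ∧ MergesTo Y X ∧ MergesTo Y' X' := by
  generalize hV : X + X' = V at h
  induction h with
  | refl U => exact ⟨X, X', hV.symm, refl X, refl X'⟩
  | @merge T R V hT _ ih =>
    obtain ⟨Y, Y', hY, hYX, hYX'⟩ := ih hV
    rcases Multiset.mem_add.mp (hY ▸ Multiset.mem_cons_self _ _) with h | h
    · obtain ⟨Y, rfl⟩ := Multiset.exists_cons_of_mem h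
      rw [Multiset.cons_add, Multiset.cons_inj_right] at hY
      exact ⟨T + Y, Y', by rw [hY, add_assoc], merge hT hYX, hYX'⟩
    · obtain ⟨Y', rfl⟩ := Multiset.exists_cons_of_mem h
      rw [Multiset.add_cons, Multiset.cons_inj_right] at hY
      exact ⟨Y, T + Y', by rw [hY, add_left_comm], hYX, merge hT hYX'⟩

theorem isZeroSumFree (h : MergesTo U V) (hU : IsZeroSumFree U) : IsZeroSumFree V := by
  intro X hX hX0 hsum
  obtain ⟨X', rfl⟩ := Multiset.le_iff_exists_add.mp hX
  obtain ⟨Y, Y', rfl, hYX, -⟩ := h.exists_add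
  exact hX0 (hYX.eq_zero_iff.mp (hU.eq_zero_of_sum_eq_zero (Multiset.le_add_right _ _)
    (hYX.sum_eq.trans hsum)))

theorem isMinZeroSum (h : MergesTo U V) (hU : IsMinZeroSum U) : IsMinZeroSum V := by
  obtain ⟨hU0, hUsum, hmin⟩ := isMinZeroSum_iff_forall_add.mp hU
  refine isMinZeroSum_iff_forall_add.mpr
    ⟨h.eq_zero_iff.not.mp hU0, h.sum_eq ▸ hUsum, fun X X' hX hsum => ?_⟩
  subst hX
  obtain ⟨Y, Y', hY, hYX, hYX'⟩ := h.exists_add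
  rw [← hYX.eq_zero_iff, ← hYX'.eq_zero_iff]
  exact hmin Y Y' hY (hYX.sum_eq.trans hsum)

end MergesTo

theorem exists_mergesTo_ker (f : G →+ C) (U : Multiset G)
    (h : ∀ T ≤ U, IsMinZeroSum (T.map f) → crossNum (T.map f) ≤ 1) :
    ∃ W R, MergesTo U (W + R) ∧ (∀ w ∈ W, f w = 0) ∧ R ≤ U ∧ IsZeroSumFree (R.map f) ∧
      crossNum (U.map f) ≤ W.card + crossNum (R.map f) := by
  induction U using Multiset.strongInductionOn with | _ U ih
  by_cases hU : IsZeroSumFree (U.map f)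
  · exact ⟨0, U, by simpa using MergesTo.refl U, by simp, le_rfl, hU, by simp⟩
  obtain ⟨_, hTfU, hTmin⟩ := exists_isMinZeroSum_le hU
  obtain ⟨T, hTU, rfl⟩ := exists_le_map_eq_of_le_map hTfU
  have hT := h T hTU hTmin
  obtain ⟨U, rfl⟩ := Multiset.le_iff_exists_add.mp hTU
  have hT0 : T ≠ 0 := fun hT0 => hTmin.1 (by simp [hT0])
  obtain ⟨W, R, hUWR, hW, hRU, hR, hle⟩ :=
    ih U (by simpa [pos_iff_ne_zero] using hT0)
      fun X hX => h X (hX.trans (Multiset.le_add_left _ _))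
  refine ⟨T.sum ::ₘ W, R, ?_, ?_, hRU.trans (Multiset.le_add_left _ _), hR, ?_⟩
  · exact .merge hT0 (by simpa only [← Multiset.singleton_add, add_assoc] using hUWR.add_left _)
  · simp only [Multiset.forall_mem_cons]
    exact ⟨(map_multiset_sum f T).trans hTmin.2.1, hW⟩
  · rw [Multiset.map_add, crossNum_add, Multiset.card_cons, Nat.cast_succ]
    linarith

section Cyclic

variable [IsAddCyclic G] [Finite G] {q : ℕ}

/- Multiplication by `q ^ j` maps `E` into the subgroup of order `q`, where every minimal zero-sum
sequence has length at most `q`. -/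
theorem exists_mergesTo_of_addOrderOf_eq_prime_pow (hq : q.Prime) (j : ℕ) {E : Multiset G}
    (hE : ∀ x ∈ E, addOrderOf x = q ^ (j + 1)) :
    ∃ W R, MergesTo E (W + R) ∧ (∀ w ∈ W, q ^ j • w = 0) ∧
      crossNum E ≤ crossNum W + (((q : ℝ) ^ j)⁻¹ - ((q : ℝ) ^ (j + 1))⁻¹) := by
  let f : G →+ G := nsmulAddMonoidHom (q ^ j)
  have hq0 : (0 : ℝ) < q := mod_cast hq.pos
  have hord {T : Multiset G} (hT : T ≤ E) : ∀ y ∈ T.map f, addOrderOf y = q := by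
    intro y hy
    obtain ⟨x, hx, rfl⟩ := Multiset.mem_map.mp hy
    have hx := hE x (Multiset.mem_of_le hT hx)
    rw [nsmulAddMonoidHom_apply, addOrderOf_nsmul_of_dvd (pow_pos hq.pos j).ne'
      (hx ▸ pow_dvd_pow q j.le_succ), hx, pow_succ, Nat.mul_div_cancel_left _ (pow_pos hq.pos j)]
  have hkill {T : Multiset G} (hT : T ≤ E) : ∀ y ∈ T.map f, q • y = 0 := fun y hy =>
    addOrderOf_dvd_iff_nsmul_eq_zero.mp (hord hT y hy).dvd
  obtain ⟨W, R, hEWR, hW, hRE, hR, hle⟩ := exists_mergesTo_ker f E fun T hT hTmin => by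
    rw [crossNum_eq_card_mul_inv (hord hT), ← div_eq_mul_inv, div_le_one hq0]
    exact mod_cast hTmin.card_le_of_nsmul_eq_zero hq.pos (hkill hT)
  refine ⟨W, R, hEWR, hW, ?_⟩
  have hWle : W.card * ((q : ℝ) ^ j)⁻¹ ≤ crossNum W :=
    mod_cast card_mul_inv_le_crossNum (pow_pos hq.pos j) hW
  have hRle : crossNum (R.map f) ≤ 1 - (q : ℝ)⁻¹ := by
    have hcard : ((R.map f).card : ℝ) + 1 ≤ q :=
      mod_cast hR.card_lt_of_nsmul_eq_zero hq.pos (hkill hRE)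
    rw [crossNum_eq_card_mul_inv (hord hRE), le_sub_iff_add_le, ← add_one_mul,
      ← div_eq_mul_inv]
    exact (div_le_one hq0).mpr hcard
  calc crossNum E = ((q : ℝ) ^ j)⁻¹ * crossNum (E.map f) := by
        rw [crossNum_eq_card_mul_inv hE, crossNum_eq_card_mul_inv (hord le_rfl),
          Multiset.card_map]
        push_cast
        rw [pow_succ, mul_inv]
        ring
    _ ≤ ((q : ℝ) ^ j)⁻¹ * (W.card + (1 - (q : ℝ)⁻¹)) := by gcongr; linarith
    _ = W.card * ((q : ℝ) ^ j)⁻¹ + (((q : ℝ) ^ j)⁻¹ - ((q : ℝ) ^ (j + 1))⁻¹) := by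
        rw [pow_succ, mul_inv]
        ring
    _ ≤ _ := by gcongr

theorem IsZeroSumFree.crossNum_le_of_prime_pow_nsmul_eq_zero (hq : q.Prime) {j : ℕ}
    {S : Multiset G} (hS : IsZeroSumFree S) (h : ∀ g ∈ S, q ^ j • g = 0) :
    crossNum S ≤ 1 - ((q : ℝ) ^ j)⁻¹ := by
  classical
  induction j generalizing S with
  | zero =>
    have hS0 : S = 0 := Multiset.eq_zero_of_forall_notMem fun g hg =>
      hS.zero_notMem (by simpa [show g = 0 by simpa using h g hg] using hg)
    simp [hS0, crossNum_zero]
  | succ j ih =>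
    have := Fact.mk hq
    set A := S.filter fun x => q ^ j • x = 0
    set E := S.filter fun x => ¬ q ^ j • x = 0
    have hAE : A + E = S := Multiset.filter_add_not _ S
    obtain ⟨W, R, hEWR, hW, hle⟩ := exists_mergesTo_of_addOrderOf_eq_prime_pow hq j (E := E)
      fun x hx => addOrderOf_eq_prime_pow (Multiset.mem_filter.mp hx).2
        (h x (Multiset.mem_filter.mp hx).1)
    have hAW : IsZeroSumFree (A + W) := by
      have hmerge := hEWR.add_left A
      rw [hAE, ← add_assoc] at hmerge
      exact (hmerge.isZeroSumFree hS).mono (Multiset.le_add_right _ _)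
    have hAWle := ih hAW fun x hx => (Multiset.mem_add.mp hx).elim
      (fun hx => (Multiset.mem_filter.mp hx).2) (hW x)
    rw [crossNum_add] at hAWle
    rw [← hAE, crossNum_add]
    linarith

theorem bigK_le_one_of_natCard_eq_prime_pow {m : ℕ} (hq : q.Prime) (hG : Nat.card G = q ^ m) :
    bigK G ≤ 1 := by
  have hexp : AddMonoid.exponent G = q ^ m := IsAddCyclic.exponent_eq_card.trans hG
  have hlittle : littleK G ≤ 1 - ((q : ℝ) ^ m)⁻¹ := littleK_le fun S hS =>
    hS.crossNum_le_of_prime_pow_nsmul_eq_zero hq fun g _ => hG ▸ card_nsmul_eq_zero'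
  rw [bigK_eq_littleK_add_inv_exponent hq hexp, hexp, Nat.cast_pow]
  exact le_sub_iff_add_le.mp hlittle

end Cyclic

section Prod

theorem crossNum_eq_inv_mul_crossNum_map_snd {n : ℕ} (hn : n.Coprime (Nat.card C))
    {U : Multiset (H × C)} (hU : ∀ x ∈ U, addOrderOf x.1 = n) :
    crossNum U = (n : ℝ)⁻¹ * crossNum (U.map Prod.snd) := by
  simp only [crossNum, Multiset.map_map, ← Multiset.sum_map_mul_left]
  refine congrArg Multiset.sum (Multiset.map_congr rfl fun x hx => ?_)
  have hcop : (addOrderOf x.1).Coprime (addOrderOf x.2) :=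
    hU x hx ▸ hn.coprime_dvd_right (addOrderOf_dvd_natCard x.2)
  rw [Prod.addOrderOf, hcop.lcm_eq_mul, hU x hx, Nat.cast_mul, mul_inv, Function.comp_apply]

variable [Finite C] {p : ℕ}

theorem exists_mergesTo_ker_snd (hC : bigK C ≤ 1) {n : ℕ} (hn : 0 < n) {U : Multiset (H × C)}
    (hU : ∀ x ∈ U, n • x.1 = 0) :
    ∃ W R, MergesTo U (W + R) ∧ (∀ w ∈ W, w.2 = 0) ∧ (∀ r ∈ R, n • r.1 = 0) ∧
      IsZeroSumFree (R.map Prod.snd) ∧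
      (n : ℝ)⁻¹ * crossNum (U.map Prod.snd) ≤
        crossNum W + (n : ℝ)⁻¹ * crossNum (R.map Prod.snd) := by
  obtain ⟨W, R, hUWR, hW, hRU, hR, hle⟩ := exists_mergesTo_ker (AddMonoidHom.snd H C) U
    fun T _ hT => hT.crossNum_le_bigK.trans hC
  refine ⟨W, R, hUWR, hW, fun r hr => hU r (Multiset.mem_of_le hRU hr), hR, ?_⟩
  have hWn : ∀ w ∈ W, n • w = 0 := fun w hw => by
    have hw1 : n • w.1 = 0 := hUWR.forall_mem
      (K := ((nsmulAddMonoidHom n).comp (AddMonoidHom.fst H C)).ker) hU w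
      (Multiset.mem_add.mpr (.inl hw))
    exact Prod.ext hw1 (by simp [show w.2 = 0 from hW w hw])
  calc (n : ℝ)⁻¹ * crossNum (U.map Prod.snd)
      ≤ (n : ℝ)⁻¹ * (W.card + crossNum (R.map Prod.snd)) := by gcongr; exact hle
    _ = W.card * (n : ℝ)⁻¹ + (n : ℝ)⁻¹ * crossNum (R.map Prod.snd) := by ring
    _ ≤ _ := by gcongr; exact card_mul_inv_le_crossNum hn hWn

/- Merge level by level, in increasing order of the `p`-power order of the `H`-component. Passing
the unmerged rest `R` from level `a` to level `a + 1` costs at most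
`(p ^ (-a) - p ^ (-a - 1)) * littleK C`, and these losses telescope. -/
theorem exists_mergesTo_ker_snd_of_prime_pow (hp : p.Prime) (hpC : p.Coprime (Nat.card C))
    (hC : bigK C ≤ 1) {a : ℕ} {U : Multiset (H × C)} (hU : ∀ x ∈ U, p ^ a • x.1 = 0) :
    ∃ W R, MergesTo U (W + R) ∧ (∀ w ∈ W, w.2 = 0) ∧ (∀ r ∈ R, p ^ a • r.1 = 0) ∧
      IsZeroSumFree (R.map Prod.snd) ∧
      crossNum U ≤ crossNum W + ((p : ℝ) ^ a)⁻¹ * crossNum (R.map Prod.snd)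
        + (1 - ((p : ℝ) ^ a)⁻¹) * littleK C := by
  classical
  induction a generalizing U with
  | zero =>
    have hU1 := crossNum_eq_inv_mul_crossNum_map_snd (Nat.coprime_one_left _) (U := U)
      (by simpa using hU)
    simpa [hU1] using exists_mergesTo_ker_snd hC one_pos (U := U) (by simpa using hU)
  | succ a ih =>
    have := Fact.mk hp
    set A := U.filter fun x => p ^ a • x.1 = 0
    set E := U.filter fun x => ¬ p ^ a • x.1 = 0
    have hAE : A + E = U := Multiset.filter_add_not _ U
    obtain ⟨W, R, hAWR, hW, hRa, hR, hAle⟩ := ih (U := A) fun x hx => (Multiset.mem_filter.mp hx).2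
    obtain ⟨W', R', hREWR, hW', hRa', hR', hREle⟩ := exists_mergesTo_ker_snd hC
      (pow_pos hp.pos (a + 1)) (U := R + E) fun x hx => (Multiset.mem_add.mp hx).elim
        (fun hx => by rw [pow_succ', mul_smul, hRa x hx, smul_zero])
        (fun hx => hU x (Multiset.mem_filter.mp hx).1)
    refine ⟨W + W', R', ?_, ?_, hRa', hR', ?_⟩
    · have hmerge := hAWR.add_right E
      rw [hAE, add_assoc] at hmerge
      exact add_assoc W W' R' ▸ hmerge.trans (hREWR.add_left W)
    · exact fun w hw => (Multiset.mem_add.mp hw).elim (hW w) (hW' w)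
    have hE := crossNum_eq_inv_mul_crossNum_map_snd (hpC.pow_left (a + 1)) (U := E) fun x hx =>
      addOrderOf_eq_prime_pow (Multiset.mem_filter.mp hx).2 (hU x (Multiset.mem_filter.mp hx).1)
    have hloss : (((p : ℝ) ^ a)⁻¹ - ((p : ℝ) ^ (a + 1))⁻¹) * crossNum (R.map Prod.snd) ≤
        (((p : ℝ) ^ a)⁻¹ - ((p : ℝ) ^ (a + 1))⁻¹) * littleK C := by
      have hp1 : (1 : ℝ) ≤ p := mod_cast hp.one_le
      refine mul_le_mul_of_nonneg_left hR.crossNum_le_littleK (sub_nonneg.mpr ?_)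
      gcongr
      exact a.le_succ
    rw [Multiset.map_add, crossNum_add] at hREle
    rw [← hAE, crossNum_add, crossNum_add, hE]
    push_cast at hREle ⊢
    linarith

theorem bigK_prod_le [Finite H] {k : ℕ} (hp : p.Prime) (hH : AddMonoid.exponent H = p ^ k)
    (hpC : p.Coprime (Nat.card C)) (hC : bigK C ≤ 1) :
    bigK (H × C) ≤ bigK H + (1 - ((p : ℝ) ^ k)⁻¹) * littleK C := by
  refine bigK_le fun U hU => ?_
  have hinl : Function.Injective (AddMonoidHom.inl H C) := Prod.mk_left_injective 0
  obtain ⟨W, R, hUWR, hW, -, hR, hle⟩ := exists_mergesTo_ker_snd_of_prime_pow hp hpC hC (a := k)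
    (U := U) fun x _ => hH ▸ AddMonoid.exponent_nsmul_eq_zero x.1
  have hR0 : R = 0 := by
    have hW0 : W.sum.2 = 0 := (AddMonoidHom.snd H C).ker.multiset_sum_mem W hW
    have hR0 : R.sum.2 = 0 := by
      have hsum : W.sum + R.sum = 0 := by rw [← Multiset.sum_add, ← hUWR.sum_eq, hU.2.1]
      simpa [hW0] using congrArg Prod.snd hsum
    have hRsum : (R.map Prod.snd).sum = 0 :=
      (map_multiset_sum (AddMonoidHom.snd H C) R).symm.trans hR0
    simpa using hR.eq_zero_of_sum_eq_zero le_rfl hRsum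
  have hWinl : W = (W.map Prod.fst).map (AddMonoidHom.inl H C) := by
    rw [Multiset.map_map]
    exact (Multiset.map_id' W).symm.trans
      (Multiset.map_congr rfl fun w hw => Prod.ext rfl (hW w hw))
  rw [hR0, Multiset.map_zero, crossNum_zero, mul_zero, add_zero] at hle
  rw [hR0, add_zero, hWinl] at hUWR
  rw [hWinl, crossNum_map_of_injective hinl] at hle
  have hWK := ((hUWR.isMinZeroSum hU).of_map hinl).crossNum_le_bigK
  linarith

end Prod

theorem bigK_pGroup_prod_zmod_q_pow_general [Finite H] [Finite C] {p k : ℕ} (hp : p.Prime)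
    (hH : AddMonoid.exponent H = p ^ k) (hpC : p.Coprime (Nat.card C)) (hC : bigK C ≤ 1) :
    bigK (H × C) = littleK H + 1 - (AddMonoid.exponent C : ℝ)⁻¹
      + ((p : ℝ) ^ k * AddMonoid.exponent C)⁻¹ := by
  have hClittle := littleK_eq_one_sub_inv_exponent hC
  refine le_antisymm ?_ ?_
  · have h := bigK_prod_le hp hH hpC hC
    rw [bigK_eq_littleK_add_inv_exponent hp hH, hClittle, hH, Nat.cast_pow] at h
    rw [mul_inv]
    linarith
  · have hcop : (p ^ k).Coprime (AddMonoid.exponent C) :=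
      (hpC.coprime_dvd_right AddGroup.exponent_dvd_nat_card).pow_left k
    have h := (add_le_add_left littleK_add_littleK_le_littleK_prod _).trans
      (littleK_add_inv_exponent_le_bigK (G := H × C))
    rw [hClittle, AddMonoid.exponent_prod, hH, lcm_eq_nat_lcm, hcop.lcm_eq_mul] at h
    push_cast at h
    linarith

end

/-- For distinct primes `p, q`, a nontrivial finite abelian `p`-group `H` with
`exp(H) = p^k` and `m ≥ 1`: `K(H ⊕ C_{q^m}) = k(H) + 1 - 1/q^m + 1/(p^k q^m)`. -/
theorem bigK_pGroup_prod_zmod_q_pow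
    (p q : ℕ) (hp : p.Prime) (hq : q.Prime) (hpq : p ≠ q)
    (H : Type*) [AddCommGroup H] [Finite H] [Nontrivial H]
    (hH : ∃ n : ℕ, Nat.card H = p ^ n)
    (k : ℕ) (hk : AddMonoid.exponent H = p ^ k)
    (m : ℕ) (hm : 0 < m) :
    bigK (H × ZMod (q ^ m))
      = littleK H + 1 - ((q : ℝ) ^ m)⁻¹ + ((p : ℝ) ^ k * (q : ℝ) ^ m)⁻¹ := by
  have hcop : p.Coprime (Nat.card (ZMod (q ^ m))) :=
    (Nat.card_zmod _).symm ▸ ((Nat.coprime_primes hp hq).mpr hpq).pow_right m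
  have : NeZero (q ^ m) := ⟨(pow_pos hq.pos m).ne'⟩
  simpa using bigK_pGroup_prod_zmod_q_pow_general hp hk hcop
    (bigK_le_one_of_natCard_eq_prime_pow hq (Nat.card_zmod _))
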